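/- Let f be the local rule of width 4 with code number 58336, and define g : ℤ^4 → ℤ by g(x_0,x_1,x_2,x_3) = x_1 − 1 + Θ(x_2 − x_1 − 2). Then for every strictly increasing s : ℤ → ℤ, the function t = g_{∞,1}(s) is strictly increasing and φ(t) = f_∞(φ(s)). -/

import Mathlib

/-- For a (strictly increasing) `s : ℤ → ℤ`, `phi s` is the occupancy bisequence:
`phi s i = 1` iff `i` lies in the range of `s`. -/
noncomputable def phi (s : ℤ → ℤ) (i : ℤ) : Fin 2 :=
  haveI := Classical.propDecidable (i ∈ Set.range s)
  if i ∈ Set.range s then 1 else 0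

/-- The local rule of width 4 with code number `C`: `f(x₁,x₂,x₃,x₄)` is the
binary digit of `C` at position `8x₁ + 4x₂ + 2x₃ + x₄`. -/
def ruleOfCode (C : ℕ) (x : Fin 4 → Fin 2) : Fin 2 :=
  if C.testBit (8 * (x 0 : ℕ) + 4 * (x 1 : ℕ) + 2 * (x 2 : ℕ) + (x 3 : ℕ)) then 1 else 0

/-- The step function: `Θ(m) = 1` if `m > 0` and `Θ(m) = 0` otherwise. -/
def theta (m : ℤ) : ℤ := if 0 < m then 1 else 0

/-- The delta function: `δ_{m,n} = 1` if `m = n` and `δ_{m,n} = 0` otherwise. -/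
def deltaZ (m k : ℤ) : ℤ := if m = k then 1 else 0

/-- The gap after particle `k` is at most 2 iff one of the next two sites is occupied. -/
theorem gap_iff (s : ℤ → ℤ) (hs : StrictMono s) (k : ℤ) :
    s (k + 1) - s k ≤ 2 ↔ (s k + 1 ∈ Set.range s ∨ s k + 2 ∈ Set.range s) := by
  have h1 : s k < s (k + 1) := hs (by omega)
  constructor
  · intro h
    rcases (by omega : s (k + 1) = s k + 1 ∨ s (k + 1) = s k + 2) with h | h
    · exact Or.inl ⟨_, h⟩
    · exact Or.inr ⟨_, h⟩
  · rintro (⟨j, hj⟩ | ⟨j, hj⟩)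
    all_goals
      have hk : k < j := hs.lt_iff_lt.1 (by omega)
      have := hs.monotone (by omega : k + 1 ≤ j)
      omega

theorem phi_eq_one (s : ℤ → ℤ) (i : ℤ) : phi s i = 1 ↔ i ∈ Set.range s := by
  unfold phi
  split_ifs with h
  · exact ⟨fun _ => h, fun _ => rfl⟩
  · exact ⟨fun h' => absurd h' (by decide), fun h' => absurd h' h⟩

theorem range_iff (s : ℤ → ℤ) (hs : StrictMono s) (i : ℤ) :
    i ∈ Set.range (fun i : ℤ => s i - 1 + theta (s (i + 1) - s i - 2)) ↔
      (i ∈ Set.range s ∧ ¬ (i + 1 ∈ Set.range s ∨ i + 2 ∈ Set.range s)) ∨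
      (i + 1 ∈ Set.range s ∧ (i + 2 ∈ Set.range s ∨ i + 3 ∈ Set.range s)) := by
  constructor
  · rintro ⟨k, hk⟩
    have hg := gap_iff s hs k
    simp only [theta] at hk
    split_ifs at hk with h
    · left
      obtain rfl : s k = i := by omega
      exact ⟨⟨k, rfl⟩, fun h' => by have := hg.2 h'; omega⟩
    · right
      obtain rfl : i = s k - 1 := by omega
      have h2 := hg.1 (by omega)
      refine ⟨⟨k, by ring⟩, ?_⟩
      rwa [show s k - 1 + 2 = s k + 1 by ring, show s k - 1 + 3 = s k + 2 by ring]
  · rintro (⟨⟨k, rfl⟩, h⟩ | ⟨⟨k, hk⟩, h⟩)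
    · rw [← gap_iff s hs k] at h
      refine ⟨k, ?_⟩
      simp only [theta]
      split_ifs <;> omega
    · rw [show i + 2 = s k + 1 by omega, show i + 3 = s k + 2 by omega, ← gap_iff s hs k] at h
      refine ⟨k, ?_⟩
      simp only [theta]
      split_ifs <;> omega

/-- For the conservative 4-input rule with code number 58336 and the particle
mapping `g(x₀,x₁,x₂,x₃) = x₁ - 1 + Θ(x₂ - x₁ - 2)`: for every strictly increasing `s : ℤ → ℤ`,
the bisequence `t = g_{∞,1}(s)`, `t i = g (s (i-1)) (s i) (s (i+1)) (s (i+2))`,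
is strictly increasing and `φ(t) = f_∞(φ(s))`. -/
theorem stmt_16 (s : ℤ → ℤ) (hs : StrictMono s) :
    StrictMono (fun i : ℤ => s i - 1 + theta (s (i + 1) - s i - 2)) ∧
    ∀ i : ℤ,
      phi (fun i : ℤ => s i - 1 + theta (s (i + 1) - s i - 2)) i =
        ruleOfCode 58336 (fun k : Fin 4 => phi s (i + (k : ℕ))) := by
  constructor
  · apply strictMono_int_of_lt_succ
    intro k
    have h1 : s k < s (k + 1) := hs (by omega)
    simp only [theta]
    split_ifs <;> omega
  · intro i
    have h := range_iff s hs i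
    have hrule : ∀ a b c d r : Fin 2,
        (r = 1 ↔ (a = 1 ∧ ¬ (b = 1 ∨ c = 1)) ∨ (b = 1 ∧ (c = 1 ∨ d = 1))) →
        r = if Nat.testBit 58336 (8 * (a : ℕ) + 4 * (b : ℕ) + 2 * (c : ℕ) + (d : ℕ))
          then 1 else 0 := by decide
    have h0 : phi s (i + ((0 : Fin 4) : ℕ)) = 1 ↔ i ∈ Set.range s := by
      rw [phi_eq_one, show i + (((0 : Fin 4) : ℕ) : ℤ) = i by simp]
    have h1 : phi s (i + ((1 : Fin 4) : ℕ)) = 1 ↔ i + 1 ∈ Set.range s := phi_eq_one s _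
    have h2 : phi s (i + ((2 : Fin 4) : ℕ)) = 1 ↔ i + 2 ∈ Set.range s := phi_eq_one s _
    have h3 : phi s (i + ((3 : Fin 4) : ℕ)) = 1 ↔ i + 3 ∈ Set.range s := phi_eq_one s _
    apply hrule
    rw [phi_eq_one, h0, h1, h2, h3, h]
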